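/- Let d ≥ 3. There exists C < ∞ such that for any r ≥ 1, any x ∈ Z^d with |x| ≥ 10r, any K₁ ⊆ B(3r), any K₂ ⊆ B(x,3r), and any ℓ ≥ 16r², one has Σ_{z ∈ C} P_z(max{T_{K₁}, T_{K₂}} ≤ ℓ) ≤ C·ℓ·cap(K₁)·cap(K₂)·|x|^{2−d}, where C = {z ∈ Z^d : |z| ≥ 4r and |z−x| ≥ 4r}. -/

import Mathlib

open MeasureTheory ENNReal Filter

noncomputable section

abbrev Zd (d : ℕ) := Fin d → ℤ

def supNorm {d : ℕ} (x : Zd d) : ℕ := Finset.univ.sup fun i => (x i).natAbs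

def IsNbr {d : ℕ} (x y : Zd d) : Prop := (∑ i, |x i - y i|) = 1

def stepVec {d : ℕ} (p : Fin d × Bool) : Zd d :=
  fun j => if j = p.1 then (if p.2 then 1 else -1) else 0

def nbrs {d : ℕ} (y : Zd d) : Finset (Zd d) :=
  Finset.univ.image fun p : Fin d × Bool => y + stepVec p

/-- A family of measures which is a simple random walk on `ℤ^d` started at `x`. -/
structure SRW (d : ℕ) where
  P : Zd d → Measure (ℕ → Zd d)
  isProb : ∀ x, IsProbabilityMeasure (P x)
  start : ∀ x, P x {ω | ω 0 = x} = 1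
  nn : ∀ x, P x {ω | ∀ t, IsNbr (ω t) (ω (t+1))} = 1
  cyl : ∀ (x : Zd d) (n : ℕ) (γ : ℕ → Zd d), γ 0 = x →
      (∀ t < n, IsNbr (γ t) (γ (t+1))) →
      P x {ω | ∀ t ≤ n, ω t = γ t} = (((2 * d : ℕ) : ℝ≥0∞))⁻¹ ^ n

def HitBy {d : ℕ} (K : Set (Zd d)) (ℓ : ℕ) : Set (ℕ → Zd d) := {ω | ∃ t ≤ ℓ, ω t ∈ K}

def Hits {d : ℕ} (K : Set (Zd d)) : Set (ℕ → Zd d) := {ω | ∃ t, ω t ∈ K}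

def nPaths (d : ℕ) : ℕ → Zd d → Zd d → ℕ
  | 0, x, y => if x = y then 1 else 0
  | t+1, x, y => ∑ z ∈ nbrs y, nPaths d t x z

def pKer (d t : ℕ) (x y : Zd d) : ℝ≥0∞ := (nPaths d t x y : ℝ≥0∞) / ((2*d : ℕ) : ℝ≥0∞)^t

def green (d : ℕ) (x y : Zd d) : ℝ≥0∞ := ∑' t, pKer d t x y

def nAvoid {d : ℕ} (K : Finset (Zd d)) : ℕ → Zd d → ℕ
  | 0, _ => 1
  | t+1, x => ∑ z ∈ (nbrs x).filter (fun z => z ∉ K), nAvoid K t z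

def escProb {d : ℕ} (K : Finset (Zd d)) (x : Zd d) : ℝ≥0∞ :=
  ⨅ n, (nAvoid K n x : ℝ≥0∞) / ((2*d : ℕ) : ℝ≥0∞)^n

def cap {d : ℕ} (K : Finset (Zd d)) : ℝ≥0∞ := ∑ x ∈ K, escProb K x

def ConnIn {d : ℕ} (S : Set (Zd d)) (x y : Zd d) : Prop :=
  ∃ (n : ℕ) (γ : ℕ → Zd d), γ 0 = x ∧ γ n = y ∧ (∀ t < n, IsNbr (γ t) (γ (t+1))) ∧ ∀ t ≤ n, γ t ∈ S

def PercSet {d : ℕ} (S : Set (Zd d)) : Prop := ∃ x ∈ S, {y | ConnIn S x y}.Infinite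

def IsAnimal {d : ℕ} (H : Finset (Zd d)) : Prop :=
  (0 : Zd d) ∈ H ∧ ∀ x ∈ H, ∀ y ∈ H, ConnIn (H : Set (Zd d)) x y

abbrev Animal (d : ℕ) := {H : Finset (Zd d) // IsAnimal H}

def zooTrace {d : ℕ} {Ω : Type*} (N : Zd d × Animal d → Ω → ℕ) (ω : Ω) : Set (Zd d) :=
  {z | ∃ p : Zd d × Animal d, 1 ≤ N p ω ∧ z - p.1 ∈ p.2.1}

def poissonProb (lam : ℝ) (k : ℕ) : ℝ≥0∞ :=
  ENNReal.ofReal (Real.exp (-lam) * lam ^ k / (Nat.factorial k))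

def cluster {d : ℕ} (S : Set (Zd d)) (x : Zd d) : Set (Zd d) := {y | x ∈ S ∧ ConnIn S x y}

def closF {d : ℕ} (H : Finset (Zd d)) : Finset (Zd d) := H ∪ H.biUnion nbrs


abbrev Worm (d : ℕ) := Σ n : ℕ, (Zd d × (Fin n → Fin d × Bool))

def wormLen {d : ℕ} (w : Worm d) : ℕ := w.1 + 1

def IsBernoulliSite {d : ℕ} (P : Measure (Zd d → Bool)) (p : ℝ≥0∞) : Prop :=
  ∀ A B : Finset (Zd d), Disjoint A B →
    P {η | (∀ a ∈ A, η a = true) ∧ ∀ b ∈ B, η b = false} = p ^ A.card * (1 - p) ^ B.card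

/-- The critical probability of Bernoulli site percolation on `ℤ^d`. -/
def pcSite (d : ℕ) : ℝ≥0∞ :=
  sInf {p | ∀ P : Measure (Zd d → Bool), IsProbabilityMeasure P → IsBernoulliSite P p →
    P {η | PercSet {x | η x = true}} = 1}

open Classical in
/-- The Grimmett–Marstrand exploration process: given an ordering `emb` of the (directed)
nearest-neighbour edges and outcomes `b t`, produce the pair (good set, bad set) at step `t`. -/
def explore {d : ℕ} (emb : (Zd d × Zd d) ↪ ℕ) (b : ℕ → Bool) : ℕ → Finset (Zd d) × Finset (Zd d)
  | 0 => if b 0 then ({0}, ∅) else (∅, {0})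
  | t+1 =>
    let G := (explore emb b t).1
    let B := (explore emb b t).2
    let cand : Finset (Zd d × Zd d) :=
      G.biUnion fun u => ((nbrs u).filter fun w => w ∉ G ∧ w ∉ B).image fun w => (u, w)
    if h : cand.Nonempty then
      let e := (Finset.exists_min_image cand (fun p => emb p) h).choose
      if b (t+1) then (insert e.2 G, B) else (G, insert e.2 B)
    else (G, B)

/-- Mutual Dirichlet energy of two measures on `ℤ^d` w.r.t. the random-walk Green function. -/
def energy (d : ℕ) (μ₁ μ₂ : Zd d → ℝ≥0∞) : ℝ≥0∞ :=
  ∑' x, ∑' y, green d x y * μ₁ x * μ₂ y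

/-!
Let `|·|` be the sup norm. If `K₁` is hit before `K₂`, then by the strong Markov property the walk
hits `K₂` afterwards with probability at most `sup_{y ∈ K₁} P_y(T_{K₂} < ∞)`, and symmetrically.
Since `K₁` and `K₂` are at distance of order `|x|`, the last exit decomposition
`P_y(T_K < ∞) ≤ ∑_{w ∈ K} g(w, y) e_K(w)` and `g(w, y) ≤ C |y - w| ^ (2 - d)` bound this probability
by `C |x| ^ (2 - d) cap(K₂)`. It remains to sum `P_z(T_K ≤ ℓ)` over starting points `z` far from
`K`: by time reversal the number of returns to `K` trades against the escape probability, so that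
the sum is at most `(1 - θ)⁻¹ ℓ cap(K)` as soon as `P_z(T_K < ∞) ≤ θ < 1` for these `z`.

Both the Green function bound and the bound `θ < 1` are comparisons with one explicit
superharmonic function, `(∑ i, x i ^ 2 + c) ^ (-(d - 2) / 2)` with `c` large.
-/

section Lattice

variable {d : ℕ}

lemma natAbs_le_supNorm (x : Zd d) (i : Fin d) : (x i).natAbs ≤ supNorm x :=
  Finset.le_sup (f := fun i => (x i).natAbs) (Finset.mem_univ i)

lemma exists_supNorm_eq_natAbs [NeZero d] (x : Zd d) : ∃ i, supNorm x = (x i).natAbs := by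
  obtain ⟨i, -, hi⟩ := Finset.exists_mem_eq_sup Finset.univ Finset.univ_nonempty
    fun i => (x i).natAbs
  exact ⟨i, hi⟩

lemma supNorm_sub_comm (x y : Zd d) : supNorm (x - y) = supNorm (y - x) := by
  simp only [supNorm, Pi.sub_apply, ← Int.natAbs_neg (x _ - y _), neg_sub]

lemma supNorm_sub_le (x y z : Zd d) : supNorm (x - z) ≤ supNorm (x - y) + supNorm (y - z) :=
  Finset.sup_le fun i _ => by
    have hx := natAbs_le_supNorm (x - y) i
    have hy := natAbs_le_supNorm (y - z) i
    simp only [Pi.sub_apply] at hx hy ⊢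
    omega

lemma isNbr_comm {x y : Zd d} : IsNbr x y ↔ IsNbr y x := by
  simp only [IsNbr, abs_sub_comm]

lemma isNbr_add_stepVec (x : Zd d) (p : Fin d × Bool) : IsNbr x (x + stepVec p) := by
  have habs : ∀ i, |x i - (x + stepVec p) i| = if i = p.1 then 1 else 0 := fun i => by
    rcases p with ⟨j, _ | _⟩ <;> by_cases h : i = j <;> simp [stepVec, h]
  simp only [IsNbr, habs, Finset.sum_ite_eq', Finset.mem_univ, if_true]

lemma exists_stepVec_of_isNbr {x y : Zd d} (h : IsNbr x y) : ∃ p, x + stepVec p = y := by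
  obtain ⟨i, -, hi⟩ := Finset.exists_ne_zero_of_sum_ne_zero (h.trans_ne one_ne_zero)
  have hle : |x i - y i| ≤ 1 := h ▸ Finset.single_le_sum
    (f := fun j => |x j - y j|) (fun _ _ => abs_nonneg _) (Finset.mem_univ i)
  have hoff : ∀ j, j ≠ i → x j = y j := fun j hj => by
    have hadd := (Finset.add_le_sum (f := fun j => |x j - y j|) (fun _ _ => abs_nonneg _)
      (Finset.mem_univ i) (Finset.mem_univ j) hj.symm).trans_eq h
    rw [← sub_eq_zero, ← abs_nonpos_iff]
    have := abs_pos.mpr (abs_ne_zero.mp hi)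
    omega
  refine ⟨(i, decide (x i < y i)), funext fun j => ?_⟩
  by_cases hj : j = i
  · subst hj
    have hne := abs_ne_zero.mp hi
    rw [abs_le] at hle
    simp only [Pi.add_apply, stepVec, if_true, decide_eq_true_eq]
    split_ifs <;> omega
  · simp only [Pi.add_apply, stepVec, hj, if_false, hoff j hj, add_zero]

lemma mem_nbrs {x y : Zd d} : y ∈ nbrs x ↔ IsNbr x y := by
  simp only [nbrs, Finset.mem_image, Finset.mem_univ, true_and]
  exact ⟨fun ⟨p, hp⟩ => hp ▸ isNbr_add_stepVec x p, exists_stepVec_of_isNbr⟩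

lemma stepVec_injective : Function.Injective (stepVec : Fin d × Bool → Zd d) := by
  rintro ⟨i, a⟩ ⟨j, b⟩ h
  have hi := congrFun h i
  by_cases hij : i = j
  · subst hij
    cases a <;> cases b <;> simp_all [stepVec]
  · cases a <;> simp [stepVec, hij] at hi

lemma sum_nbrs {M : Type*} [AddCommMonoid M] (f : Zd d → M) (x : Zd d) :
    ∑ y ∈ nbrs x, f y = ∑ p : Fin d × Bool, f (x + stepVec p) :=
  Finset.sum_image fun _ _ _ _ h => stepVec_injective (add_left_cancel h)

lemma card_nbrs (x : Zd d) : (nbrs x).card = 2 * d := by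
  rw [Finset.card_eq_sum_ones, sum_nbrs]
  simp [mul_comm]

end Lattice

section NeighbourAverage

variable {d : ℕ} {f g : Zd d → ℝ≥0∞}

/-- The one-step averaging (transition) operator of simple random walk on `ℤ^d`. -/
def nbrAvg (f : Zd d → ℝ≥0∞) (x : Zd d) : ℝ≥0∞ := ((2 * d : ℕ) : ℝ≥0∞)⁻¹ * ∑ y ∈ nbrs x, f y

lemma nbrAvg_mono (h : f ≤ g) : nbrAvg f ≤ nbrAvg g := fun _ =>
  mul_le_mul_right (Finset.sum_le_sum fun y _ => h y) _

lemma nbrAvg_add (f g : Zd d → ℝ≥0∞) : nbrAvg (f + g) = nbrAvg f + nbrAvg g := by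
  ext x
  simp only [nbrAvg, Pi.add_apply, Finset.sum_add_distrib, mul_add]

lemma nbrAvg_const_mul (a : ℝ≥0∞) (f : Zd d → ℝ≥0∞) (x : Zd d) :
    nbrAvg (fun y => a * f y) x = a * nbrAvg f x := by
  simp only [nbrAvg, ← Finset.mul_sum]
  ring

lemma nbrAvg_sum {ι : Type*} (s : Finset ι) (f : ι → Zd d → ℝ≥0∞) (x : Zd d) :
    nbrAvg (fun y => ∑ i ∈ s, f i y) x = ∑ i ∈ s, nbrAvg (f i) x := by
  simp only [nbrAvg, ← Finset.mul_sum]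
  rw [Finset.sum_comm]

lemma nbrAvg_const [NeZero d] (a : ℝ≥0∞) (x : Zd d) : nbrAvg (fun _ => a) x = a := by
  rw [nbrAvg, Finset.sum_const, card_nbrs, nsmul_eq_mul, ← mul_assoc, ENNReal.inv_mul_cancel,
    one_mul]
  · exact_mod_cast mul_ne_zero two_ne_zero (NeZero.ne d)
  · exact ENNReal.natCast_ne_top _

lemma nbrAvg_comp_sub (f : Zd d → ℝ≥0∞) (a x : Zd d) :
    nbrAvg (fun y => f (y - a)) x = nbrAvg f (x - a) := by
  simp only [nbrAvg, sum_nbrs, add_sub_right_comm]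

lemma tsum_mul_nbrAvg (f g : Zd d → ℝ≥0∞) :
    ∑' x, f x * nbrAvg g x = ∑' x, nbrAvg f x * g x := by
  have hsum : ∀ (h : Zd d → ℝ≥0∞) x,
      ∑ y ∈ nbrs x, h y = ∑' y, (nbrs x : Set (Zd d)).indicator h y :=
    fun h x => sum_eq_tsum_indicator h _
  simp only [nbrAvg, hsum, mul_left_comm (f _), mul_assoc, ENNReal.tsum_mul_left,
    ← ENNReal.tsum_mul_right]
  simp only [← ENNReal.tsum_mul_left (a := f _)]
  rw [ENNReal.tsum_comm]
  congr! 5 with y x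
  by_cases h : IsNbr x y
  · simp only [Set.indicator, Finset.mem_coe, mem_nbrs, h, isNbr_comm.mp h, if_true]
  · simp only [Set.indicator, Finset.mem_coe, mem_nbrs, h, mt isNbr_comm.mp h, if_false, mul_zero,
      zero_mul]

end NeighbourAverage

section Markov

lemma measure_ext_of_cylinder {α : Type*} [Countable α] [MeasurableSpace α]
    [MeasurableSingletonClass α] {μ ν : Measure (ℕ → α)} [IsFiniteMeasure μ]
    (h : ∀ (n : ℕ) (γ : ℕ → α), μ {ω | ∀ t ≤ n, ω t = γ t} = ν {ω | ∀ t ≤ n, ω t = γ t}) :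
    μ = ν := by
  have hproj := ProbabilityTheory.isProjectiveMeasureFamily_map_restrict (P := μ)
    (X := fun (t : ℕ) (ω : ℕ → α) => ω t) fun t => (measurable_pi_apply t).aemeasurable
  refine IsProjectiveLimit.unique (P := fun I => μ.map (I.restrict ·)) (fun I => rfl)
    ((isProjectiveLimit_nat_iff hproj ν).mpr fun n => Measure.ext_of_singleton fun a => ?_)
  have hcyl : Preorder.frestrictLe (π := fun _ => α) n ⁻¹' {a} =
      {ω : ℕ → α | ∀ t ≤ n, ω t = a ⟨min t n, by simp⟩} := by
    ext ω
    simp only [Set.mem_preimage, Set.mem_singleton_iff, funext_iff, Set.mem_ofPred_eq]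
    refine ⟨fun hω t ht => ?_, fun hω t => ?_⟩
    · simp [min_eq_left ht, ← hω]
    · simpa [min_eq_left (Finset.mem_Iic.mp t.2)] using hω t (Finset.mem_Iic.mp t.2)
  rw [Measure.map_apply (by fun_prop) (measurableSet_singleton a), hcyl, ← h, ← hcyl]
  exact (Measure.map_apply (by fun_prop) (measurableSet_singleton a)).symm

/-- The trajectory which starts at `a` and then follows `ω`, delayed by one step. -/
def prepend {α : Type*} (a : α) (ω : ℕ → α) : ℕ → α
  | 0 => a
  | t + 1 => ω t

lemma measurable_prepend {α : Type*} [MeasurableSpace α] (a : α) : Measurable (prepend a) :=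
  measurable_pi_lambda _ fun
    | 0 => measurable_const
    | t + 1 => measurable_pi_apply t

namespace SRW

variable {d : ℕ} (W : SRW d)

instance (x : Zd d) : IsProbabilityMeasure (W.P x) := W.isProb x

lemma ae_isNbr (x : Zd d) : ∀ᵐ ω ∂W.P x, ω 0 = x ∧ ∀ t, IsNbr (ω t) (ω (t + 1)) := by
  have hnn : MeasurableSet {ω : ℕ → Zd d | ∀ t, IsNbr (ω t) (ω (t + 1))} := by
    unfold IsNbr
    measurability
  have hstart : MeasurableSet {ω : ℕ → Zd d | ω 0 = x} := by measurability
  filter_upwards [(mem_ae_iff_prob_eq_one hstart).mpr (W.start x),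
    (mem_ae_iff_prob_eq_one hnn).mpr (W.nn x)] with ω h0 hω using ⟨h0, hω⟩

open Classical in
lemma measure_cylinder (x : Zd d) (n : ℕ) (γ : ℕ → Zd d) :
    W.P x {ω | ∀ t ≤ n, ω t = γ t} =
      if γ 0 = x ∧ ∀ t < n, IsNbr (γ t) (γ (t + 1)) then ((2 * d : ℕ) : ℝ≥0∞)⁻¹ ^ n else 0 := by
  split_ifs with hγ
  · exact W.cyl x n γ hγ.1 hγ.2
  · refine measure_eq_zero_iff_ae_notMem.mpr ?_
    filter_upwards [W.ae_isNbr x] with ω hω hωγ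
    refine hγ ⟨hωγ 0 n.zero_le ▸ hω.1, fun t ht => ?_⟩
    rw [← hωγ t ht.le, ← hωγ (t + 1) ht]
    exact hω.2 t

lemma measure_cylinder_eq_nbrAvg [NeZero d] (x : Zd d) (n : ℕ) (γ : ℕ → Zd d) :
    W.P x {ω | ∀ t ≤ n, ω t = γ t} =
      nbrAvg (fun y => W.P y (prepend x ⁻¹' {ω | ∀ t ≤ n, ω t = γ t})) x := by
  classical
  obtain rfl | hx := eq_or_ne (γ 0) x
  · cases n with
    | zero => simp [prepend, nbrAvg_const, W.start]
    | succ n =>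
      have hpre : prepend (γ 0) ⁻¹' {ω | ∀ t ≤ n + 1, ω t = γ t} =
          {ω | ∀ t ≤ n, ω t = γ (t + 1)} := by
        ext ω
        simp only [Set.mem_preimage, Set.mem_ofPred_eq, ← Nat.lt_succ_iff]
        exact Nat.forall_lt_succ_left.trans (and_iff_right rfl)
      simp only [hpre, nbrAvg, measure_cylinder, ite_and, Finset.sum_ite_eq, mem_nbrs, if_true,
        Nat.forall_lt_succ_left, mul_ite, mul_zero, pow_succ', zero_add]
  · have hpre : prepend x ⁻¹' {ω | ∀ t ≤ n, ω t = γ t} = ∅ :=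
      Set.eq_empty_of_forall_notMem fun ω hω => hx (hω 0 n.zero_le).symm
    simp only [hpre, measure_empty, nbrAvg_const, measure_cylinder, hx, false_and, if_false]

theorem measure_eq_nbrAvg [NeZero d] (x : Zd d) {E : Set (ℕ → Zd d)} (hE : MeasurableSet E) :
    W.P x E = nbrAvg (fun y => W.P y (prepend x ⁻¹' E)) x := by
  let ν := ((2 * d : ℕ) : ℝ≥0∞)⁻¹ • ∑ y ∈ nbrs x, (W.P y).map (prepend x)
  have hν : ∀ {E}, MeasurableSet E → ν E = nbrAvg (fun y => W.P y (prepend x ⁻¹' E)) x :=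
    fun hE => by
      simp only [ν, nbrAvg, Measure.smul_apply, Measure.coe_finsetSum, Finset.sum_apply,
        smul_eq_mul, Measure.map_apply (measurable_prepend x) hE]
  suffices h : W.P x = ν by rw [← hν hE, ← h]
  refine measure_ext_of_cylinder fun n γ => ?_
  rw [hν (by measurability), W.measure_cylinder_eq_nbrAvg]

end SRW

end Markov

section Hitting

variable {d : ℕ}

lemma measurableSet_hitBy (K : Set (Zd d)) (n : ℕ) : MeasurableSet (HitBy K n) := by
  have : MeasurableSet K := .of_discrete
  unfold HitBy
  measurability

lemma hitBy_mono (K : Set (Zd d)) : Monotone (HitBy K) := fun _ _ hmn _ ⟨t, ht, hω⟩ =>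
  ⟨t, ht.trans hmn, hω⟩

lemma hitBy_subset_hits (K : Set (Zd d)) (n : ℕ) : HitBy K n ⊆ Hits K := fun _ ⟨t, _, hω⟩ => ⟨t, hω⟩

lemma iUnion_hitBy (K : Set (Zd d)) : ⋃ n, HitBy K n = Hits K :=
  (Set.iUnion_subset (hitBy_subset_hits K)).antisymm fun _ ⟨t, hω⟩ =>
    Set.mem_iUnion.mpr ⟨t, t, le_rfl, hω⟩

lemma prepend_preimage_hitBy_of_mem {K : Set (Zd d)} {x : Zd d} (hx : x ∈ K) (n : ℕ) :
    prepend x ⁻¹' HitBy K n = Set.univ :=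
  Set.eq_univ_of_forall fun _ => ⟨0, n.zero_le, hx⟩

lemma prepend_preimage_hitBy_zero {K : Set (Zd d)} {x : Zd d} (hx : x ∉ K) :
    prepend x ⁻¹' HitBy K 0 = ∅ :=
  Set.eq_empty_of_forall_notMem fun _ ⟨_, ht, hω⟩ => hx (by rwa [Nat.le_zero.mp ht] at hω)

lemma prepend_preimage_hitBy_succ {K : Set (Zd d)} {x : Zd d} (hx : x ∉ K) (n : ℕ) :
    prepend x ⁻¹' HitBy K (n + 1) = HitBy K n := by
  ext ω
  constructor
  · rintro ⟨_ | t, ht, hω⟩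
    exacts [absurd hω hx, ⟨t, Nat.le_of_succ_le_succ ht, hω⟩]
  · rintro ⟨t, ht, hω⟩
    exact ⟨t + 1, Nat.succ_le_succ ht, hω⟩

namespace SRW

variable (W : SRW d)

lemma prob_hits_le {K : Set (Zd d)} {x : Zd d} {a : ℝ≥0∞} (h : ∀ n, W.P x (HitBy K n) ≤ a) :
    W.P x (Hits K) ≤ a := by
  rw [← iUnion_hitBy, (hitBy_mono K).measure_iUnion]
  exact iSup_le h

variable [NeZero d]

lemma prob_hitBy_of_mem {K : Set (Zd d)} {x : Zd d} (hx : x ∈ K) (n : ℕ) :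
    W.P x (HitBy K n) = 1 := by
  simp only [W.measure_eq_nbrAvg x (measurableSet_hitBy K n), prepend_preimage_hitBy_of_mem hx,
    measure_univ, nbrAvg_const]

lemma prob_hitBy_zero {K : Set (Zd d)} {x : Zd d} (hx : x ∉ K) : W.P x (HitBy K 0) = 0 := by
  simp only [W.measure_eq_nbrAvg x (measurableSet_hitBy K 0), prepend_preimage_hitBy_zero hx,
    measure_empty, nbrAvg_const]

lemma prob_hitBy_succ {K : Set (Zd d)} {x : Zd d} (hx : x ∉ K) (n : ℕ) :
    W.P x (HitBy K (n + 1)) = nbrAvg (fun y => W.P y (HitBy K n)) x := by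
  rw [W.measure_eq_nbrAvg x (measurableSet_hitBy K (n + 1)), prepend_preimage_hitBy_succ hx]

theorem prob_hits_le_of_superharmonic {K : Set (Zd d)} {v : Zd d → ℝ≥0∞} (hv : nbrAvg v ≤ v)
    (hK : ∀ y ∈ K, 1 ≤ v y) (x : Zd d) : W.P x (Hits K) ≤ v x := by
  refine W.prob_hits_le fun n => ?_
  induction n generalizing x with
  | zero =>
    by_cases hx : x ∈ K
    · exact prob_le_one.trans (hK x hx)
    · exact (W.prob_hitBy_zero hx).trans_le zero_le
  | succ n ih =>
    by_cases hx : x ∈ K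
    · exact prob_le_one.trans (hK x hx)
    · rw [W.prob_hitBy_succ hx]
      exact (nbrAvg_mono ih x).trans (hv x)

-- Strong Markov property at the first entrance into `K₁ ∪ K₂`, by induction on the time horizon.
theorem prob_hitBy_inter_le {K₁ K₂ : Set (Zd d)} {α β : ℝ≥0∞}
    (hα : ∀ y ∈ K₁, W.P y (Hits K₂) ≤ α) (hβ : ∀ y ∈ K₂, W.P y (Hits K₁) ≤ β)
    (x : Zd d) (n : ℕ) :
    W.P x (HitBy K₁ n ∩ HitBy K₂ n) ≤ α * W.P x (HitBy K₁ n) + β * W.P x (HitBy K₂ n) := by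
  have hmem₁ : ∀ x ∈ K₁, ∀ n, W.P x (HitBy K₁ n ∩ HitBy K₂ n) ≤ α * W.P x (HitBy K₁ n) :=
    fun x hx n => by
      rw [W.prob_hitBy_of_mem hx, mul_one]
      exact (measure_mono (Set.inter_subset_right.trans (hitBy_subset_hits _ _))).trans (hα x hx)
  have hmem₂ : ∀ x ∈ K₂, ∀ n, W.P x (HitBy K₁ n ∩ HitBy K₂ n) ≤ β * W.P x (HitBy K₂ n) :=
    fun x hx n => by
      rw [W.prob_hitBy_of_mem hx, mul_one]
      exact (measure_mono (Set.inter_subset_left.trans (hitBy_subset_hits _ _))).trans (hβ x hx)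
  induction n generalizing x with
  | zero =>
    by_cases hx₁ : x ∈ K₁
    · exact (hmem₁ x hx₁ 0).trans le_self_add
    · exact (measure_mono_null Set.inter_subset_left (W.prob_hitBy_zero hx₁)).trans_le zero_le
  | succ n ih =>
    by_cases hx₁ : x ∈ K₁
    · exact (hmem₁ x hx₁ _).trans le_self_add
    by_cases hx₂ : x ∈ K₂
    · exact (hmem₂ x hx₂ _).trans le_add_self
    rw [W.measure_eq_nbrAvg x ((measurableSet_hitBy _ _).inter (measurableSet_hitBy _ _)),
      Set.preimage_inter, prepend_preimage_hitBy_succ hx₁, prepend_preimage_hitBy_succ hx₂,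
      W.prob_hitBy_succ hx₁, W.prob_hitBy_succ hx₂, ← nbrAvg_const_mul, ← nbrAvg_const_mul]
    exact (nbrAvg_mono ih x).trans_eq (congrFun (nbrAvg_add _ _) x)

end SRW

end Hitting

section Escape

variable {d : ℕ}

/-- The probability that the walk started at `x` avoids `K` at each of the times `1, …, n`; the
starting point itself may lie in `K`. -/
def avoidProb (K : Finset (Zd d)) (n : ℕ) (x : Zd d) : ℝ≥0∞ :=
  (nAvoid K n x : ℝ≥0∞) / ((2 * d : ℕ) : ℝ≥0∞) ^ n

/-- The transition operator of the walk killed upon entering `K`. -/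
def killedAvg (K : Set (Zd d)) (f : Zd d → ℝ≥0∞) : Zd d → ℝ≥0∞ := nbrAvg (Kᶜ.indicator f)

lemma killedAvg_mono (K : Set (Zd d)) : Monotone (killedAvg K) := fun _ _ h =>
  nbrAvg_mono fun x => Set.indicator_le_indicator (h x)

lemma avoidProb_zero (K : Finset (Zd d)) : avoidProb K 0 = fun _ => 1 := by
  ext x
  simp [avoidProb, nAvoid]

lemma avoidProb_succ (K : Finset (Zd d)) (n : ℕ) :
    avoidProb K (n + 1) = killedAvg K (avoidProb K n) := by
  classical
  ext x
  simp only [avoidProb, nAvoid, killedAvg, nbrAvg, Set.indicator_apply, Set.mem_compl_iff,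
    Finset.mem_coe, ← Finset.sum_filter, div_eq_mul_inv, ← Finset.sum_mul, Nat.cast_sum]
  rw [ENNReal.inv_pow, ENNReal.inv_pow, pow_succ]
  ring

lemma avoidProb_add (K : Finset (Zd d)) (k n : ℕ) :
    avoidProb K (n + k) = (killedAvg K)^[k] (avoidProb K n) := by
  induction k with
  | zero => rfl
  | succ k ih => rw [← add_assoc, avoidProb_succ, ih, Function.iterate_succ_apply']

variable [NeZero d]

lemma antitone_avoidProb (K : Finset (Zd d)) : Antitone (avoidProb K) := by
  have hiter : avoidProb K = fun n => (killedAvg K)^[n] fun _ => 1 := funext fun n => by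
    rw [← avoidProb_zero K, ← avoidProb_add, zero_add]
  rw [hiter]
  refine (killedAvg_mono _).antitone_iterate_of_map_le fun x => ?_
  exact (nbrAvg_mono (Set.indicator_le_self _ _) x).trans_eq (nbrAvg_const 1 x)

lemma avoidProb_le_one (K : Finset (Zd d)) (n : ℕ) (x : Zd d) : avoidProb K n x ≤ 1 :=
  (antitone_avoidProb K n.zero_le x).trans_eq (by rw [avoidProb_zero])

lemma tendsto_avoidProb (K : Finset (Zd d)) (x : Zd d) :
    Tendsto (fun n => avoidProb K n x) atTop (nhds (escProb K x)) :=
  tendsto_atTop_iInf fun _ _ hmn => antitone_avoidProb K hmn x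

lemma iterate_killedAvg_le_escProb {K : Finset (Zd d)} {φ : Zd d → ℝ≥0∞} (hφ : φ ≤ escProb K)
    (k : ℕ) : (killedAvg K)^[k] φ ≤ escProb K := fun x => le_iInf fun n =>
  calc (killedAvg K)^[k] φ x ≤ (killedAvg K)^[k] (avoidProb K n) x :=
        (killedAvg_mono _).iterate k (hφ.trans fun y => iInf_le _ n) x
    _ = avoidProb K (n + k) x := by rw [avoidProb_add]
    _ ≤ avoidProb K n x := antitone_avoidProb K (n.le_add_right k) x

namespace SRW

variable (W : SRW d)

lemma indicator_avoidProb_add_prob_hitBy (K : Finset (Zd d)) (n : ℕ) (x : Zd d) :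
    (K : Set (Zd d))ᶜ.indicator (avoidProb K n) x + W.P x (HitBy (K : Set (Zd d)) n) = 1 := by
  induction n generalizing x with
  | zero =>
    by_cases hx : x ∈ (K : Set (Zd d))
    · simp [hx, W.prob_hitBy_of_mem hx]
    · simp only [W.prob_hitBy_zero hx, Set.indicator_of_mem (Set.mem_compl hx), avoidProb_zero,
        add_zero]
  | succ n ih =>
    by_cases hx : x ∈ (K : Set (Zd d))
    · simp [hx, W.prob_hitBy_of_mem hx]
    · rw [Set.indicator_of_mem (Set.mem_compl hx), W.prob_hitBy_succ hx, avoidProb_succ, killedAvg]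
      exact (congrFun (nbrAvg_add _ _) x).symm.trans
        ((congrArg (nbrAvg · x) (funext ih)).trans (nbrAvg_const 1 x))

lemma avoidProb_succ_add_nbrAvg (K : Finset (Zd d)) (n : ℕ) (x : Zd d) :
    avoidProb K (n + 1) x + nbrAvg (fun y => W.P y (HitBy (K : Set (Zd d)) n)) x = 1 := by
  rw [avoidProb_succ, killedAvg, ← nbrAvg_const 1 x,
    ← funext (W.indicator_avoidProb_add_prob_hitBy K n)]
  exact (congrFun (nbrAvg_add _ _) x).symm

lemma one_sub_prob_hits_le_escProb (K : Finset (Zd d)) (x : Zd d) :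
    1 - W.P x (Hits (K : Set (Zd d))) ≤ escProb K x := le_iInf fun n => by
  rw [tsub_le_iff_right, ← W.indicator_avoidProb_add_prob_hitBy K n x]
  exact add_le_add (Set.indicator_apply_le' (fun _ => le_rfl) fun _ => zero_le)
    (measure_mono (hitBy_subset_hits _ _))

-- Reversing time turns a path that enters `K` at time `k` into one that leaves `K` for `k` steps.
lemma tsum_mul_prob_hitBy (K : Finset (Zd d)) (φ : Zd d → ℝ≥0∞) (n : ℕ) :
    ∑' x, φ x * W.P x (HitBy (K : Set (Zd d)) n) =
      ∑ k ∈ Finset.range (n + 1), ∑ y ∈ K, (killedAvg K)^[k] φ y := by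
  have hsum : ∑ y ∈ K, φ y = ∑' x, (K : Set (Zd d)).indicator φ x := sum_eq_tsum_indicator φ K
  induction n generalizing φ with
  | zero =>
    simp only [zero_add, Finset.range_one, Finset.sum_singleton, Function.iterate_zero, id, hsum]
    congr! 2 with x
    by_cases hx : x ∈ (K : Set (Zd d))
    · simp only [W.prob_hitBy_of_mem hx, mul_one, Set.indicator_of_mem hx]
    · simp only [W.prob_hitBy_zero hx, mul_zero, Set.indicator_of_notMem hx]
  | succ n ih =>
    have hstep : ∀ x, φ x * W.P x (HitBy (K : Set (Zd d)) (n + 1)) =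
        (K : Set (Zd d)).indicator φ x + (K : Set (Zd d))ᶜ.indicator φ x *
          nbrAvg (fun y => W.P y (HitBy (K : Set (Zd d)) n)) x := fun x => by
      by_cases hx : x ∈ (K : Set (Zd d))
      · simp only [W.prob_hitBy_of_mem hx, Set.indicator_of_mem hx, mul_one,
          Set.indicator_of_notMem (Set.notMem_compl_iff.mpr hx), zero_mul, add_zero]
      · simp only [W.prob_hitBy_succ hx, Set.indicator_of_notMem hx,
          Set.indicator_of_mem (Set.mem_compl hx), zero_add]
    rw [tsum_congr hstep, ENNReal.tsum_add, tsum_mul_nbrAvg, Finset.sum_range_succ', add_comm,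
      Function.iterate_zero, id, hsum]
    exact congrArg (· + _) (ih (killedAvg K φ) (sum_eq_tsum_indicator _ K))

theorem tsum_one_sub_prob_hits_mul_prob_hitBy_le (K : Finset (Zd d)) (n : ℕ) :
    ∑' x, (1 - W.P x (Hits (K : Set (Zd d)))) * W.P x (HitBy (K : Set (Zd d)) n) ≤
      n * cap K := by
  have hK : ∀ y ∈ K, 1 - W.P y (Hits (K : Set (Zd d))) = 0 := fun y hy =>
    tsub_eq_zero_of_le ((W.prob_hitBy_of_mem hy 0).ge.trans (measure_mono (hitBy_subset_hits _ _)))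
  rw [W.tsum_mul_prob_hitBy, Finset.sum_range_succ', Function.iterate_zero, id,
    Finset.sum_eq_zero hK, add_zero]
  refine (Finset.sum_le_card_nsmul _ _ (cap K) fun k _ => ?_).trans_eq (by simp)
  exact Finset.sum_le_sum fun y _ =>
    iterate_killedAvg_le_escProb (W.one_sub_prob_hits_le_escProb K) (k + 1) y

theorem tsum_prob_hitBy_le {K : Finset (Zd d)} {S : Set (Zd d)} {θ : ℝ≥0∞}
    (hθ : ∀ z ∈ S, W.P z (Hits (K : Set (Zd d))) ≤ θ) (n : ℕ) :
    (1 - θ) * ∑' z : S, W.P z (HitBy (K : Set (Zd d)) n) ≤ n * cap K := by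
  rw [← ENNReal.tsum_mul_left]
  refine (ENNReal.tsum_le_tsum fun z : S => ?_).trans <|
    (ENNReal.tsum_comp_le_tsum_of_injective Subtype.val_injective _).trans
      (W.tsum_one_sub_prob_hits_mul_prob_hitBy_le K n)
  exact mul_le_mul_left (tsub_le_tsub_left (hθ z z.2) 1) _

end SRW

end Escape

section Green

variable {d : ℕ}

lemma pKer_zero (w x : Zd d) : pKer d 0 w x = if w = x then 1 else 0 := by
  simp [pKer, nPaths]

lemma pKer_succ (t : ℕ) (w : Zd d) : pKer d (t + 1) w = nbrAvg (pKer d t w) := by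
  ext x
  simp only [pKer, nPaths, nbrAvg, div_eq_mul_inv, ← Finset.sum_mul, Nat.cast_sum]
  rw [ENNReal.inv_pow, ENNReal.inv_pow, pow_succ]
  ring

-- The sums over `t < n` of `pKer d t w` solve `u (n + 1) = 1_{w} + nbrAvg (u n)`, `u 0 = 0`, so
-- `η * u n ≤ v` by induction.
theorem mul_green_le {w : Zd d} {v : Zd d → ℝ≥0∞} {η : ℝ≥0∞}
    (hv : ∀ x, nbrAvg v x + (if w = x then η else 0) ≤ v x) (x : Zd d) : η * green d w x ≤ v x := by
  rw [green, ENNReal.tsum_eq_iSup_nat, ENNReal.mul_iSup]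
  refine iSup_le fun n => ?_
  induction n generalizing x with
  | zero => simp
  | succ n ih =>
    rw [Finset.sum_range_succ', pKer_zero, mul_add, mul_ite, mul_one, mul_zero]
    refine (add_le_add_left ?_ _).trans (hv x)
    simp only [pKer_succ, ← nbrAvg_sum, ← nbrAvg_const_mul]
    exact nbrAvg_mono ih x

namespace SRW

variable [NeZero d] (W : SRW d)

-- Decomposition at the time `t` and place `w` of the last visit to `K` before time `n`.
theorem prob_hitBy_eq_sum_pKer (K : Finset (Zd d)) (n : ℕ) (x : Zd d) :
    W.P x (HitBy (K : Set (Zd d)) n) =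
      ∑ t ∈ Finset.range (n + 1), ∑ w ∈ K, pKer d t w x * avoidProb K (n - t) w := by
  have hzero : ∀ m x, ∑ w ∈ K, pKer d 0 w x * avoidProb K m w =
      (K : Set (Zd d)).indicator (avoidProb K m) x := fun m x => by
    simp [pKer_zero, Set.indicator_apply]
  induction n generalizing x with
  | zero =>
    rw [zero_add, Finset.sum_range_one, hzero, avoidProb_zero]
    by_cases hx : x ∈ (K : Set (Zd d))
    · rw [W.prob_hitBy_of_mem hx, Set.indicator_of_mem hx]
    · rw [W.prob_hitBy_zero hx, Set.indicator_of_notMem hx]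
  | succ n ih =>
    have hshift : ∑ t ∈ Finset.range (n + 1), ∑ w ∈ K,
        pKer d (t + 1) w x * avoidProb K (n + 1 - (t + 1)) w =
        nbrAvg (fun y => W.P y (HitBy (K : Set (Zd d)) n)) x := by
      simp only [ih, nbrAvg_sum, Nat.add_sub_add_right, pKer_succ, mul_comm _ (avoidProb K _ _),
        nbrAvg_const_mul]
    rw [Finset.sum_range_succ', hshift, Nat.sub_zero, hzero]
    by_cases hx : x ∈ (K : Set (Zd d))
    · rw [W.prob_hitBy_of_mem hx, Set.indicator_of_mem hx, add_comm, W.avoidProb_succ_add_nbrAvg]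
    · rw [W.prob_hitBy_succ hx, Set.indicator_of_notMem hx, add_zero]

theorem prob_hits_le_sum_green {K : Finset (Zd d)} {x : Zd d} (hx : ∀ w ∈ K, green d w x ≠ ⊤) :
    W.P x (Hits (K : Set (Zd d))) ≤ ∑ w ∈ K, green d w x * escProb K w := by
  have htendsto : Tendsto (fun n => ∑ w ∈ K, ∑' t, pKer d t w x * avoidProb K (n - t) w) atTop
      (nhds (∑ w ∈ K, green d w x * escProb K w)) := by
    refine tendsto_finsetSum _ fun w hw => ?_
    rw [green, ← ENNReal.tsum_mul_right]
    simp only [← lintegral_count]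
    refine tendsto_lintegral_of_dominated_convergence (pKer d · w x) (fun _ => .of_discrete)
      (fun n => .of_forall fun t => mul_le_of_le_one_right' (avoidProb_le_one K _ w)) ?_
      (.of_forall fun t => ENNReal.Tendsto.const_mul
        ((tendsto_avoidProb K w).comp (tendsto_sub_atTop_nat t))
        (.inr (ne_top_of_le_ne_top (hx w hw) (ENNReal.le_tsum t))))
    rw [lintegral_count]
    exact hx w hw
  refine W.prob_hits_le fun m => ge_of_tendsto htendsto ?_
  filter_upwards [eventually_ge_atTop m] with n hn
  calc W.P x (HitBy (K : Set (Zd d)) m) ≤ W.P x (HitBy (K : Set (Zd d)) n) :=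
        measure_mono (hitBy_mono _ hn)
    _ = ∑ w ∈ K, ∑ t ∈ Finset.range (n + 1), pKer d t w x * avoidProb K (n - t) w := by
        rw [W.prob_hitBy_eq_sum_pKer, Finset.sum_comm]
    _ ≤ ∑ w ∈ K, ∑' t, pKer d t w x * avoidProb K (n - t) w :=
        Finset.sum_le_sum fun w _ => ENNReal.sum_le_tsum _

end SRW

end Green

section RadialFunction

lemma ringChoose_two_eq (q : ℝ) : Ring.choose q 2 = q * (q - 1) / 2 := by
  have h := Ring.descPochhammer_eq_factorial_smul_choose q 2
  simp only [descPochhammer_succ_right, descPochhammer_zero, CharP.cast_eq_zero, sub_zero, one_mul,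
    Nat.cast_one, Polynomial.smeval_mul, Polynomial.smeval_X, pow_one, Polynomial.smeval_sub,
    Polynomial.smeval_one, pow_zero, one_smul, Nat.factorial_two, nsmul_eq_mul, Nat.cast_ofNat] at h
  linarith

lemma exists_abs_one_add_rpow_sub_le (q : ℝ) {ρ : ℝ} (hρ₀ : 0 < ρ) (hρ₁ : ρ < 1) :
    ∃ M, ∀ v : ℝ, |v| < ρ →
      |(1 + v) ^ q - (1 + q * v + q * (q - 1) / 2 * v ^ 2 + Ring.choose q 3 * v ^ 3)| ≤
        M * v ^ 4 := by
  lift ρ to NNReal using hρ₀.le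
  obtain ⟨a, -, C, -, hC⟩ := Real.one_add_rpow_hasFPowerSeriesOnBall_zero (a := q)
    |>.uniform_geometric_approx' (r' := ρ) (by exact_mod_cast hρ₁)
  refine ⟨C * (a / ρ) ^ 4, fun v hv => ?_⟩
  have happrox := hC v (by simpa using hv) 4
  simp only [zero_add, FormalMultilinearSeries.partialSum, Finset.sum_range_succ,
    Finset.range_zero, Finset.sum_empty, binomialSeries_apply, List.ofFn_const, List.prod_replicate,
    pow_zero, pow_one, Ring.choose_zero_right, Ring.choose_one_right, ringChoose_two_eq,
    smul_eq_mul, mul_one, Real.norm_eq_abs] at happrox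
  refine happrox.trans_eq ?_
  rw [← (by decide : Even 4).pow_abs v]
  ring

lemma exists_one_add_rpow_add_one_sub_rpow_le (q : ℝ) {ρ : ℝ} (hρ₀ : 0 < ρ) (hρ₁ : ρ < 1) :
    ∃ M, 0 ≤ M ∧ ∀ v : ℝ, |v| < ρ →
      (1 + v) ^ q + (1 - v) ^ q ≤ 2 + q * (q - 1) * v ^ 2 + M * v ^ 4 := by
  obtain ⟨M, hM⟩ := exists_abs_one_add_rpow_sub_le q hρ₀ hρ₁
  refine ⟨2 * |M|, by positivity, fun v hv => ?_⟩
  have hpos := (abs_le.mp (hM v hv)).2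
  have hneg := (abs_le.mp (hM (-v) (by rwa [abs_neg]))).2
  have hle : M * v ^ 4 ≤ |M| * v ^ 4 := by gcongr; exact le_abs_self M
  rw [← sub_eq_add_neg] at hneg
  linarith

lemma one_add_mul_le_one_sub_rpow_neg {p t : ℝ} (hp : 0 ≤ p) (ht : t < 1) :
    1 + p * t ≤ (1 - t) ^ (-p) := by
  have hlog := Real.log_le_sub_one_of_pos (sub_pos.mpr ht)
  rw [Real.rpow_def_of_pos (sub_pos.mpr ht)]
  nlinarith [Real.add_one_le_exp (Real.log (1 - t) * -p)]

variable {ι : Type*} [Fintype ι]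

lemma sum_rpow_le {p M s : ℝ} (hM : 0 ≤ M)
    (htaylor : ∀ v : ℝ, |v| < 3 / 4 →
      (1 + v) ^ (-p) + (1 - v) ^ (-p) ≤ 2 + -p * (-p - 1) * v ^ 2 + M * v ^ 4)
    {x : ι → ℝ} (hs : 0 < s) (hx : ∀ i, |2 * x i / s| < 3 / 4) :
    ∑ i, ((s + 2 * x i) ^ (-p) + (s - 2 * x i) ^ (-p)) ≤
      s ^ (-p) * (2 * Fintype.card ι + 4 * p * (p + 1) * (∑ i, x i ^ 2) / s ^ 2 +
        16 * M * (∑ i, x i ^ 2) ^ 2 / s ^ 4) := by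
  have hterm : ∀ i, (s + 2 * x i) ^ (-p) + (s - 2 * x i) ^ (-p) ≤
      s ^ (-p) * (2 + 4 * p * (p + 1) / s ^ 2 * x i ^ 2 + 16 * M / s ^ 4 * x i ^ 4) := fun i => by
    obtain ⟨hlow, hup⟩ := abs_lt.mp (hx i)
    have hadd : s + 2 * x i = s * (1 + 2 * x i / s) := by field_simp
    have hsub : s - 2 * x i = s * (1 - 2 * x i / s) := by field_simp
    rw [hadd, hsub, Real.mul_rpow hs.le (by linarith), Real.mul_rpow hs.le (by linarith), ← mul_add]
    exact mul_le_mul_of_nonneg_left ((htaylor _ (hx i)).trans_eq (by ring)) (by positivity)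
  have hfour : ∑ i, x i ^ 4 ≤ (∑ i, x i ^ 2) ^ 2 := by
    simpa only [← pow_mul] using
      Finset.sum_sq_le_sq_sum_of_nonneg fun i (_ : i ∈ Finset.univ) => sq_nonneg (x i)
  calc _ ≤ ∑ i, s ^ (-p) *
        (2 + 4 * p * (p + 1) / s ^ 2 * x i ^ 2 + 16 * M / s ^ 4 * x i ^ 4) :=
        Finset.sum_le_sum fun i _ => hterm i
    _ = s ^ (-p) * (2 * Fintype.card ι + 4 * p * (p + 1) / s ^ 2 * (∑ i, x i ^ 2) +
          16 * M / s ^ 4 * ∑ i, x i ^ 4) := by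
        simp only [← Finset.mul_sum, Finset.sum_add_distrib, Finset.sum_const, Finset.card_univ,
          nsmul_eq_mul, mul_comm (2 : ℝ)]
    _ ≤ s ^ (-p) * (2 * Fintype.card ι + 4 * p * (p + 1) / s ^ 2 * (∑ i, x i ^ 2) +
          16 * M / s ^ 4 * (∑ i, x i ^ 2) ^ 2) := by gcongr
    _ = _ := by ring

lemma abs_two_mul_div_lt {x Q c : ℝ} (hxQ : x ^ 2 ≤ Q) (hc : 1 ≤ c) :
    |2 * x / (Q + 1 + c)| < 3 / 4 := by
  have hs : 0 < Q + 1 + c := by nlinarith [sq_nonneg x]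
  rw [abs_div, abs_of_pos hs, div_lt_iff₀ hs, abs_lt]
  constructor <;> nlinarith [sq_nonneg (3 * x + 4), sq_nonneg (3 * x - 4)]

lemma second_order_add_fourth_order_le {a M Q s : ℝ} (hM : 0 ≤ M) (hQ : 0 ≤ Q) (hQs : Q ≤ s)
    (hs : 0 < s) (h : M ≤ a * (s - Q)) : a * Q / s ^ 2 + M * Q ^ 2 / s ^ 4 ≤ a / s := by
  have hfour : M * Q ^ 2 / s ^ 4 ≤ M / s ^ 2 := by
    rw [div_le_div_iff₀ (by positivity) (by positivity)]
    calc M * Q ^ 2 * s ^ 2 ≤ M * s ^ 2 * s ^ 2 := by gcongr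
      _ = M * s ^ 4 := by ring
  calc a * Q / s ^ 2 + M * Q ^ 2 / s ^ 4 ≤ a * Q / s ^ 2 + M / s ^ 2 := by gcongr
    _ = (a * Q + M) / s ^ 2 := by ring
    _ ≤ (a * s) / s ^ 2 := by gcongr; linarith
    _ = a / s := by field_simp

theorem exists_sum_rpow_le {p : ℝ} (hp : 0 < p) (hcard : (Fintype.card ι : ℝ) = 2 * (p + 1)) :
    ∃ c, 1 ≤ c ∧ ∀ x : ι → ℝ,
      ∑ i, ((∑ j, x j ^ 2 + 1 + c + 2 * x i) ^ (-p) + (∑ j, x j ^ 2 + 1 + c - 2 * x i) ^ (-p)) ≤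
        2 * Fintype.card ι * (∑ j, x j ^ 2 + c) ^ (-p) := by
  obtain ⟨M, hM, htaylor⟩ := exists_one_add_rpow_add_one_sub_rpow_le (-p)
    (by norm_num : (0 : ℝ) < 3 / 4) (by norm_num)
  set n := (Fintype.card ι : ℝ)
  have hn : 0 < n := by rw [hcard]; positivity
  set c := 1 + 8 * M / (n * p) with hc
  have hc1 : 1 ≤ c := le_add_of_nonneg_right (by positivity)
  refine ⟨c, hc1, fun x => ?_⟩
  set Q := ∑ j, x j ^ 2
  set s := Q + 1 + c with hs
  have hQ : 0 ≤ Q := Finset.sum_nonneg fun _ _ => sq_nonneg _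
  have hs0 : 0 < s := by positivity
  have hM' : 16 * M ≤ 4 * p * (p + 1) * (s - Q) := by
    have hcn : n * p * c = n * p + 8 * M := by rw [hc]; field_simp
    have : 4 * p * (p + 1) * (s - Q) = 2 * (n * p + n * p * c) := by rw [hs, hcard]; ring
    nlinarith [mul_pos hn hp]
  calc _ ≤ s ^ (-p) * (2 * n + 4 * p * (p + 1) * Q / s ^ 2 + 16 * M * Q ^ 2 / s ^ 4) :=
        sum_rpow_le hM htaylor hs0 fun i => abs_two_mul_div_lt
          (Finset.single_le_sum (fun j _ => sq_nonneg (x j)) (Finset.mem_univ i)) hc1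
    _ ≤ s ^ (-p) * (2 * n + 4 * p * (p + 1) / s) := by
        rw [add_assoc]
        gcongr
        exact second_order_add_fourth_order_le (by positivity) hQ (by linarith) hs0 hM'
    _ = s ^ (-p) * (2 * n * (1 + p * (1 / s))) := by rw [hcard]; ring
    _ ≤ s ^ (-p) * (2 * n * (1 - 1 / s) ^ (-p)) := by
        gcongr
        exact one_add_mul_le_one_sub_rpow_neg hp.le ((div_lt_one hs0).mpr (by linarith))
    _ = 2 * n * (s * (1 - 1 / s)) ^ (-p) := by
        rw [Real.mul_rpow hs0.le (sub_nonneg.mpr ((div_le_one hs0).mpr (by linarith)))]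
        ring
    _ = 2 * n * (Q + c) ^ (-p) := by
        rw [mul_one_sub, mul_one_div_cancel hs0.ne', hs]
        ring_nf

variable {d : ℕ}

/-- The squared Euclidean norm. -/
def normSq (x : Zd d) : ℝ := ∑ i, (x i : ℝ) ^ 2

/-- The Lyapunov function `(|x|² + c) ^ (-(d - 2) / 2)`, a regularization of the Newtonian potential
`|x| ^ (2 - d)` which is superharmonic on all of `ℤ^d` for large `c`. -/
def radial (c : ℝ) (x : Zd d) : ℝ≥0∞ := ENNReal.ofReal ((normSq x + c) ^ (-(((d : ℝ) - 2) / 2)))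

lemma normSq_nonneg (x : Zd d) : 0 ≤ normSq x := Finset.sum_nonneg fun _ _ => sq_nonneg _

lemma normSq_stepVec (p : Fin d × Bool) : normSq (stepVec p) = 1 := by
  rcases p with ⟨i, _ | _⟩ <;> simp [normSq, stepVec, ite_pow]

lemma normSq_add_stepVec (x : Zd d) (i : Fin d) (b : Bool) :
    normSq (x + stepVec (i, b)) = normSq x + 1 + if b then 2 * (x i : ℝ) else -(2 * x i) := by
  rw [← normSq_stepVec (i, b)]
  simp only [normSq, Pi.add_apply, Int.cast_add, add_sq, Finset.sum_add_distrib]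
  cases b <;> simp [stepVec, ite_pow] <;> ring

lemma sq_supNorm_le_normSq [NeZero d] (x : Zd d) : (supNorm x : ℝ) ^ 2 ≤ normSq x := by
  obtain ⟨i, hi⟩ := exists_supNorm_eq_natAbs x
  rw [hi, Nat.cast_natAbs, Int.cast_abs, sq_abs]
  exact Finset.single_le_sum (f := fun i => (x i : ℝ) ^ 2) (fun _ _ => sq_nonneg _)
    (Finset.mem_univ i)

lemma normSq_sub_single (x : Zd d) (i : Fin d) (m : ℤ) :
    normSq (x - Pi.single i m) = normSq x - 2 * m * x i + m ^ 2 := by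
  have hpi : ∀ j, ((Pi.single i m : Zd d) j : ℝ) = if j = i then (m : ℝ) else 0 := fun j => by
    rw [Pi.single_apply, apply_ite (Int.cast : ℤ → ℝ), Int.cast_zero]
  simp only [normSq, Pi.sub_apply, Int.cast_sub, hpi, sub_sq, Finset.sum_add_distrib,
    Finset.sum_sub_distrib, mul_ite, ite_pow, mul_zero, ne_eq, OfNat.ofNat_ne_zero,
    not_false_eq_true, zero_pow, Finset.sum_ite_eq', Finset.mem_univ, if_true]
  ring

lemma normSq_le_mul_sq_supNorm (x : Zd d) : normSq x ≤ d * (supNorm x : ℝ) ^ 2 := by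
  refine (Finset.sum_le_card_nsmul _ _ ((supNorm x : ℝ) ^ 2) fun i _ => ?_).trans_eq (by simp)
  rw [← sq_abs, ← Int.cast_abs, Int.abs_eq_natAbs, Int.cast_natCast]
  gcongr
  exact natAbs_le_supNorm x i

-- The center is moved a distance `m` away from `x` along a coordinate realizing `supNorm x`; for
-- large `m` this separates `x` from the ball of radius `a` in Euclidean distance.
lemma exists_separating_center [NeZero d] {x : Zd d} {a b : ℕ} (hx : b ≤ supNorm x) (m : ℕ) :
    ∃ q : Zd d, ((m : ℝ) + b) ^ 2 ≤ normSq (x - q) ∧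
      ∀ y, supNorm y ≤ a → normSq (y - q) ≤ (m : ℝ) ^ 2 + 2 * m * a + d * (a : ℝ) ^ 2 := by
  obtain ⟨i, hi⟩ := exists_supNorm_eq_natAbs x
  obtain ⟨ε, hε, hεx⟩ : ∃ ε : ℤ, |ε| = 1 ∧ ε * x i = supNorm x := by
    rcases le_total 0 (x i) with h | h
    · exact ⟨1, by simp, by omega⟩
    · exact ⟨-1, by simp, by omega⟩
  have hsub : ∀ y : Zd d,
      normSq (y - Pi.single i (-(ε * m))) = normSq y + 2 * m * (ε * y i : ℤ) + (m : ℝ) ^ 2 :=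
    fun y => by
      have hε2 : (ε : ℝ) ^ 2 = 1 := by
        rw [← sq_abs, ← Int.cast_abs, hε, Int.cast_one, one_pow]
      rw [normSq_sub_single]
      push_cast
      linear_combination (m : ℝ) ^ 2 * hε2
  refine ⟨Pi.single i (-(ε * m)), ?_, fun y hy => ?_⟩
  · have hbx : (b : ℝ) ≤ supNorm x := by exact_mod_cast hx
    rw [hsub, hεx, Int.cast_natCast]
    calc ((m : ℝ) + b) ^ 2 ≤ (m + supNorm x) ^ 2 := by gcongr
      _ = (supNorm x : ℝ) ^ 2 + 2 * m * supNorm x + (m : ℝ) ^ 2 := by ring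
      _ ≤ _ := by gcongr; exact sq_supNorm_le_normSq x
  · have hεy : ε * y i ≤ a := by
      calc ε * y i ≤ |y i| := by
            rw [← one_mul |y i|, ← hε, ← abs_mul]
            exact le_abs_self _
        _ ≤ a := by
            rw [Int.abs_eq_natAbs]
            exact_mod_cast (natAbs_le_supNorm y i).trans hy
    have hεy' : ((ε * y i : ℤ) : ℝ) ≤ a := by exact_mod_cast hεy
    have hya : (supNorm y : ℝ) ≤ a := by exact_mod_cast hy
    rw [hsub]
    calc normSq y + 2 * m * (ε * y i : ℤ) + (m : ℝ) ^ 2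
        ≤ d * (a : ℝ) ^ 2 + 2 * m * a + (m : ℝ) ^ 2 := by
          gcongr
          exact (normSq_le_mul_sq_supNorm y).trans (by gcongr)
      _ = (m : ℝ) ^ 2 + 2 * m * a + d * (a : ℝ) ^ 2 := by ring

theorem exists_nbrAvg_radial_le (hd : 3 ≤ d) :
    ∃ c : ℝ, 1 ≤ c ∧ nbrAvg (radial c : Zd d → ℝ≥0∞) ≤ radial c := by
  have hd' : (3 : ℝ) ≤ d := by exact_mod_cast hd
  obtain ⟨c, hc, hsum⟩ := exists_sum_rpow_le (ι := Fin d) (p := ((d : ℝ) - 2) / 2) (by linarith)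
    (by rw [Fintype.card_fin]; ring)
  refine ⟨c, hc, fun x => ?_⟩
  have hnonneg : ∀ y : Zd d, 0 ≤ (normSq y + c) ^ (-(((d : ℝ) - 2) / 2)) := fun y =>
    Real.rpow_nonneg (add_nonneg (normSq_nonneg y) (zero_le_one.trans hc)) _
  have hreal : ∑ p : Fin d × Bool, (normSq (x + stepVec p) + c) ^ (-(((d : ℝ) - 2) / 2)) ≤
      (2 * d : ℕ) * (normSq x + c) ^ (-(((d : ℝ) - 2) / 2)) := by
    have h := hsum fun i => x i
    rw [Fintype.card_fin] at h
    push_cast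
    refine (Eq.le ?_).trans h
    simp only [Fintype.sum_prod_type, Fintype.sum_bool, normSq_add_stepVec, if_true,
      Bool.false_eq_true, if_false]
    refine Finset.sum_congr rfl fun i _ => ?_
    rw [normSq]
    congr 2 <;> ring
  simp only [nbrAvg, sum_nbrs, radial]
  rw [← ENNReal.ofReal_sum_of_nonneg fun _ _ => hnonneg _,
    ENNReal.inv_mul_le_iff (by simp; omega) (ENNReal.natCast_ne_top _), ← ENNReal.ofReal_natCast,
    ← ENNReal.ofReal_mul (Nat.cast_nonneg _)]
  exact ENNReal.ofReal_le_ofReal hreal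

lemma nbrAvg_radial_zero_lt (hd : 3 ≤ d) {c : ℝ} (hc : 0 < c) :
    nbrAvg (radial c : Zd d → ℝ≥0∞) 0 < radial c (0 : Zd d) := by
  have : NeZero d := ⟨by omega⟩
  have hd' : (3 : ℝ) ≤ d := by exact_mod_cast hd
  have hconst : nbrAvg (radial c : Zd d → ℝ≥0∞) 0 =
      nbrAvg (fun _ : Zd d => ENNReal.ofReal ((1 + c) ^ (-(((d : ℝ) - 2) / 2)))) 0 := by
    simp only [nbrAvg, sum_nbrs, radial, zero_add, normSq_stepVec]
  have hzero : normSq (0 : Zd d) = 0 := by simp [normSq]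
  rw [hconst, nbrAvg_const, radial, hzero, zero_add]
  exact (ENNReal.ofReal_lt_ofReal_iff (Real.rpow_pos_of_pos hc _)).mpr
    (Real.rpow_lt_rpow_of_neg hc (by linarith) (by linarith))

theorem exists_green_le_radial (hd : 3 ≤ d) {c : ℝ} (hc : 0 < c)
    (hsuper : nbrAvg (radial c : Zd d → ℝ≥0∞) ≤ radial c) :
    ∃ C : ℝ≥0∞, C ≠ ⊤ ∧ ∀ w x, green d w x ≤ C * radial c (x - w) := by
  have hlt := nbrAvg_radial_zero_lt hd hc
  have hη : radial c (0 : Zd d) - nbrAvg (radial c) 0 ≠ 0 := (tsub_pos_of_lt hlt).ne'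
  refine ⟨(radial c (0 : Zd d) - nbrAvg (radial c) 0)⁻¹, ENNReal.inv_ne_top.mpr hη, fun w x => ?_⟩
  rw [← ENNReal.mul_le_iff_le_inv hη (ENNReal.sub_ne_top ENNReal.ofReal_ne_top)]
  refine mul_green_le (v := fun y => radial c (y - w)) (fun y => ?_) x
  rw [nbrAvg_comp_sub]
  split_ifs with h
  · rw [h, sub_self, add_tsub_cancel_of_le hlt.le]
  · rw [add_zero]
    exact hsuper _

lemma radial_le [NeZero d] (hd : 2 ≤ d) {c : ℝ} (hc : 0 ≤ c) {κ X : ℕ} {x : Zd d} (hX : 1 ≤ X)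
    (h : X ≤ κ * supNorm x) :
    radial c x ≤ (κ : ℝ≥0∞) ^ (d - 2) * (X : ℝ≥0∞) ^ ((2 : ℤ) - d) := by
  obtain ⟨m, rfl⟩ := Nat.exists_eq_add_of_le' hd
  have hX0 : (0 : ℝ) < X := by exact_mod_cast hX
  have hκ : (0 : ℝ) < κ := by
    exact_mod_cast pos_of_mul_pos_left (hX.trans h : 0 < κ * supNorm x) (Nat.zero_le _)
  have hbase : ((X : ℝ) / κ) ^ 2 ≤ normSq x + c :=
    calc ((X : ℝ) / κ) ^ 2 ≤ (supNorm x : ℝ) ^ 2 := by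
          gcongr
          rw [div_le_iff₀' hκ]
          exact_mod_cast h
      _ ≤ normSq x + c := (sq_supNorm_le_normSq x).trans (le_add_of_nonneg_right hc)
  have hreal : (normSq x + c) ^ (-((((m + 2 : ℕ) : ℝ) - 2) / 2)) ≤ ((κ : ℝ) / X) ^ m :=
    calc (normSq x + c) ^ (-((((m + 2 : ℕ) : ℝ) - 2) / 2))
        ≤ (((X : ℝ) / κ) ^ 2) ^ (-((((m + 2 : ℕ) : ℝ) - 2) / 2)) :=
          Real.rpow_le_rpow_of_nonpos (by positivity) hbase
            (by push_cast; linarith [(Nat.cast_nonneg m : (0 : ℝ) ≤ m)])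
      _ = ((X : ℝ) / κ) ^ (-(m : ℝ)) := by
          rw [← Real.rpow_natCast_mul (by positivity)]
          congr 1
          push_cast
          ring
      _ = ((κ : ℝ) / X) ^ m := by
          rw [Real.rpow_neg (by positivity), Real.rpow_natCast, ← inv_pow, inv_div]
  calc radial c x ≤ ENNReal.ofReal (((κ : ℝ) / X) ^ m) := ENNReal.ofReal_le_ofReal hreal
    _ = (κ : ℝ≥0∞) ^ (m + 2 - 2) * (X : ℝ≥0∞) ^ ((2 : ℤ) - (m + 2 : ℕ)) := by
        rw [Nat.add_sub_cancel, show (2 : ℤ) - (m + 2 : ℕ) = -(m : ℤ) by push_cast; ring,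
          ENNReal.zpow_neg, zpow_natCast, ENNReal.ofReal_pow (by positivity),
          ENNReal.ofReal_div_of_pos hX0, ENNReal.ofReal_natCast, ENNReal.ofReal_natCast,
          div_eq_mul_inv, mul_pow, ENNReal.inv_pow]

end RadialFunction

section HittingBounds

variable {d : ℕ}

-- `radial c (y - q) / t ^ (-(d - 2) / 2)` is superharmonic and at least `1` on `K`.
lemma SRW.prob_hits_le_of_normSq_le [NeZero d] (W : SRW d) (hd : 2 ≤ d) {c s t : ℝ} {q : Zd d}
    (hsuper : nbrAvg (radial c : Zd d → ℝ≥0∞) ≤ radial c) {K : Set (Zd d)} {z : Zd d}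
    (hc : 0 < c) (ht : 0 < t) (hs : 0 < s) (hK : ∀ y ∈ K, normSq (y - q) + c ≤ t)
    (hz : s ≤ normSq (z - q) + c) :
    W.P z (Hits K) ≤ ENNReal.ofReal ((t / s) ^ (((d : ℝ) - 2) / 2)) := by
  have hd' : (2 : ℝ) ≤ d := by exact_mod_cast hd
  have ht' : 0 < t ^ (-(((d : ℝ) - 2) / 2)) := Real.rpow_pos_of_pos ht _
  set a := ENNReal.ofReal (t ^ (-(((d : ℝ) - 2) / 2))) with ha
  have ha0 : a ≠ 0 := (ENNReal.ofReal_pos.mpr ht').ne'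
  calc W.P z (Hits K) ≤ a⁻¹ * radial c (z - q) := by
        refine W.prob_hits_le_of_superharmonic (v := fun y => a⁻¹ * radial c (y - q))
          (fun y => ?_) (fun y hy => ?_) z
        · rw [nbrAvg_const_mul, nbrAvg_comp_sub]
          exact mul_le_mul_right (hsuper _) _
        · rw [← ENNReal.mul_le_iff_le_inv ha0 ENNReal.ofReal_ne_top, mul_one]
          exact ENNReal.ofReal_le_ofReal (Real.rpow_le_rpow_of_nonpos
            (add_pos_of_nonneg_of_pos (normSq_nonneg _) hc) (hK y hy) (by linarith))
    _ ≤ a⁻¹ * ENNReal.ofReal (s ^ (-(((d : ℝ) - 2) / 2))) := by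
        gcongr
        exact ENNReal.ofReal_le_ofReal (Real.rpow_le_rpow_of_nonpos hs hz (by linarith))
    _ = ENNReal.ofReal ((t / s) ^ (((d : ℝ) - 2) / 2)) := by
        rw [ha, ← ENNReal.ofReal_inv_of_pos ht', ← ENNReal.ofReal_mul (by positivity),
          Real.rpow_neg ht.le, Real.rpow_neg hs.le, inv_inv, ← div_eq_mul_inv,
          Real.div_rpow ht.le hs.le]

theorem exists_prob_hits_le (hd : 3 ≤ d) (κ : ℕ) :
    ∃ C : ℝ≥0∞, C ≠ ⊤ ∧ ∀ (W : SRW d) (K : Finset (Zd d)) (y : Zd d) (X : ℕ), 1 ≤ X →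
      (∀ w ∈ K, X ≤ κ * supNorm (y - w)) →
      W.P y (Hits (K : Set (Zd d))) ≤ C * (X : ℝ≥0∞) ^ ((2 : ℤ) - d) * cap K := by
  have : NeZero d := ⟨by omega⟩
  obtain ⟨c, hc, hsuper⟩ := exists_nbrAvg_radial_le hd
  obtain ⟨C, hC, hgreen⟩ := exists_green_le_radial hd (zero_lt_one.trans_le hc) hsuper
  refine ⟨C * (κ : ℝ≥0∞) ^ (d - 2),
    ENNReal.mul_ne_top hC (ENNReal.pow_ne_top (ENNReal.natCast_ne_top κ)),
    fun W K y X hX hfar => ?_⟩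
  calc W.P y (Hits (K : Set (Zd d))) ≤ ∑ w ∈ K, green d w y * escProb K w :=
        W.prob_hits_le_sum_green fun w _ =>
          ne_top_of_le_ne_top (ENNReal.mul_ne_top hC ENNReal.ofReal_ne_top) (hgreen w y)
    _ ≤ ∑ w ∈ K, C * ((κ : ℝ≥0∞) ^ (d - 2) * (X : ℝ≥0∞) ^ ((2 : ℤ) - d)) * escProb K w := by
        gcongr with w hw
        refine (hgreen w y).trans ?_
        gcongr
        exact radial_le (by omega) (by linarith) hX (hfar w hw)
    _ = C * (κ : ℝ≥0∞) ^ (d - 2) * (X : ℝ≥0∞) ^ ((2 : ℤ) - d) * cap K := by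
        rw [← Finset.mul_sum, cap, ← mul_assoc C]

lemma mul_add_div_mul_add_le {A B c R : ℝ} (hA : 0 ≤ A) (hAB : A ≤ B) (hc : 0 < c) (hR : 1 ≤ R) :
    (A * R + c) / (B * R + c) ≤ (A + c) / (B + c) := by
  have hB : 0 ≤ B := hA.trans hAB
  rw [div_le_div_iff₀ (by positivity) (by positivity)]
  nlinarith [mul_nonneg (mul_nonneg hc.le (sub_nonneg.mpr hAB)) (sub_nonneg.mpr hR)]

theorem exists_prob_hits_le_lt_one (hd : 3 ≤ d) {a b : ℕ} (hab : a < b) :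
    ∃ θ : ℝ≥0∞, θ < 1 ∧ ∀ (W : SRW d) (r : ℕ) (x z : Zd d) (K : Finset (Zd d)), 1 ≤ r →
      (∀ u ∈ K, supNorm (u - x) ≤ a * r) → b * r ≤ supNorm (z - x) →
      W.P z (Hits (K : Set (Zd d))) ≤ θ := by
  have : NeZero d := ⟨by omega⟩
  have hd' : (3 : ℝ) ≤ d := by exact_mod_cast hd
  obtain ⟨c, hc, hsuper⟩ := exists_nbrAvg_radial_le hd
  have hc0 : 0 < c := zero_lt_one.trans_le hc
  -- Shifting the center by `d * a ^ 2 * r` makes the gain `2 * (d * a ^ 2) * (b - a)` beat the loss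
  -- `d * a ^ 2` from comparing `normSq` with `supNorm`.
  set A : ℝ := ((d * a ^ 2 : ℕ) : ℝ) ^ 2 + 2 * (d * a ^ 2 : ℕ) * a + d * (a : ℝ) ^ 2 with hA
  set B : ℝ := ((d * a ^ 2 : ℕ) + b : ℝ) ^ 2 with hB
  have hA0 : 0 ≤ A := by positivity
  have hAB : A < B := by
    have hab' : (a : ℝ) + 1 ≤ b := by exact_mod_cast hab
    have hda : (0 : ℝ) ≤ d * (a : ℝ) ^ 2 := by positivity
    rw [hA, hB]
    push_cast
    nlinarith [mul_le_mul_of_nonneg_left hab' hda]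
  refine ⟨ENNReal.ofReal (((A + c) / (B + c)) ^ (((d : ℝ) - 2) / 2)), ?_,
    fun W r x z K hr hK hz => ?_⟩
  · rw [← ENNReal.ofReal_one]
    refine (ENNReal.ofReal_lt_ofReal_iff one_pos).mpr (Real.rpow_lt_one (by positivity) ?_ ?_)
    · exact (div_lt_one (by positivity)).mpr (by linarith)
    · linarith
  obtain ⟨q, hzq, hKq⟩ := exists_separating_center (a := a * r) hz (d * a ^ 2 * r)
  refine (W.prob_hits_le_of_normSq_le (by omega) (t := A * r ^ 2 + c) (s := B * r ^ 2 + c)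
    (q := x + q) hsuper hc0 (by positivity) (by positivity) (fun y hy => ?_) ?_).trans ?_
  · have hy' := hKq (y - x) (hK y hy)
    rw [← sub_sub]
    refine add_le_add_left (hy'.trans_eq ?_) c
    rw [hA]
    push_cast
    ring
  · rw [← sub_sub]
    refine add_le_add_left ((Eq.le ?_).trans hzq) c
    rw [hB]
    push_cast
    ring
  · have hr2 : (1 : ℝ) ≤ (r : ℝ) ^ 2 := one_le_pow₀ (by exact_mod_cast hr)
    refine ENNReal.ofReal_le_ofReal (Real.rpow_le_rpow (by positivity)
      (mul_add_div_mul_add_le hA0 hAB.le hc0 hr2) (by linarith))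

theorem exists_tsum_prob_hitBy_le (hd : 3 ≤ d) {a b : ℕ} (hab : a < b) :
    ∃ C : ℝ≥0∞, C ≠ ⊤ ∧ ∀ (W : SRW d) (r n : ℕ) (x : Zd d) (K : Finset (Zd d)) (S : Set (Zd d)),
      1 ≤ r → (∀ u ∈ K, supNorm (u - x) ≤ a * r) → (∀ z ∈ S, b * r ≤ supNorm (z - x)) →
      ∑' z : S, W.P z (HitBy (K : Set (Zd d)) n) ≤ C * n * cap K := by
  have : NeZero d := ⟨by omega⟩
  obtain ⟨θ, hθ, hhit⟩ := exists_prob_hits_le_lt_one hd hab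
  have hθ0 : 1 - θ ≠ 0 := (tsub_pos_of_lt hθ).ne'
  refine ⟨(1 - θ)⁻¹, ENNReal.inv_ne_top.mpr hθ0, fun W r n x K S hr hK hS => ?_⟩
  rw [mul_assoc, ← ENNReal.mul_le_iff_le_inv hθ0 (ENNReal.sub_ne_top ENNReal.one_ne_top)]
  exact W.tsum_prob_hitBy_le (fun z hz => hhit W r x z K hr hK (hS z hz)) n

end HittingBounds

theorem sum_double_hitting_upper_bound_general {d : ℕ} (hd : 3 ≤ d) {a b : ℕ} (hab : a < b) :
    ∃ C : ℝ≥0∞, C ≠ ⊤ ∧ ∀ (W : SRW d) (r ℓ : ℕ) (x : Zd d) (K₁ K₂ : Finset (Zd d)),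
      1 ≤ r → (2 * a + 1) * r ≤ supNorm x →
      (∀ u ∈ K₁, supNorm u ≤ a * r) → (∀ u ∈ K₂, supNorm (u - x) ≤ a * r) →
      ∑' z : {z : Zd d // b * r ≤ supNorm z ∧ b * r ≤ supNorm (z - x)},
          W.P z.1 (HitBy (K₁ : Set (Zd d)) ℓ ∩ HitBy (K₂ : Set (Zd d)) ℓ)
        ≤ C * ℓ * cap K₁ * cap K₂ * ((supNorm x : ℝ≥0∞)) ^ ((2 : ℤ) - d) := by
  have : NeZero d := ⟨by omega⟩
  obtain ⟨G, hG, hhit⟩ := exists_prob_hits_le hd (2 * a + 1)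
  obtain ⟨D, hD, hsum⟩ := exists_tsum_prob_hitBy_le hd hab
  refine ⟨2 * G * D, ENNReal.mul_ne_top (ENNReal.mul_ne_top ENNReal.ofNat_ne_top hG) hD,
    fun W r ℓ x K₁ K₂ hr hx hK₁ hK₂ => ?_⟩
  have hX : 1 ≤ supNorm x := (Nat.mul_pos (by omega) hr).trans_le hx
  have hfar : ∀ y ∈ K₁, ∀ w ∈ K₂, supNorm x ≤ (2 * a + 1) * supNorm (y - w) := fun y hy w hw => by
    have hyw := supNorm_sub_le x y 0
    have hxw := supNorm_sub_le x w y
    have hy0 := hK₁ y hy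
    have hwx := hK₂ w hw
    rw [sub_zero, sub_zero] at hyw
    rw [supNorm_sub_comm x w, supNorm_sub_comm w y] at hxw
    have : r ≤ supNorm (y - w) := by linarith
    nlinarith
  set p := (supNorm x : ℝ≥0∞) ^ ((2 : ℤ) - d)
  set S := {z : Zd d | b * r ≤ supNorm z ∧ b * r ≤ supNorm (z - x)}
  calc ∑' z : S, W.P z (HitBy (K₁ : Set (Zd d)) ℓ ∩ HitBy (K₂ : Set (Zd d)) ℓ)
      ≤ ∑' z : S, (G * p * cap K₂ * W.P z (HitBy (K₁ : Set (Zd d)) ℓ) +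
          G * p * cap K₁ * W.P z (HitBy (K₂ : Set (Zd d)) ℓ)) :=
        ENNReal.tsum_le_tsum fun z => W.prob_hitBy_inter_le
          (fun y hy => hhit W K₂ y _ hX (hfar y hy))
          (fun w hw => hhit W K₁ w _ hX fun y hy => supNorm_sub_comm w y ▸ hfar y hy w hw) z ℓ
    _ ≤ G * p * cap K₂ * (D * ℓ * cap K₁) + G * p * cap K₁ * (D * ℓ * cap K₂) := by
        rw [ENNReal.tsum_add, ENNReal.tsum_mul_left, ENNReal.tsum_mul_left]
        gcongr
        · exact hsum W r ℓ 0 K₁ S hr (by simpa using hK₁) fun z hz => by simpa using hz.1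
        · exact hsum W r ℓ x K₂ S hr hK₂ fun z hz => hz.2
    _ = 2 * G * D * ℓ * cap K₁ * cap K₂ * p := by ring

theorem sum_double_hitting_upper_bound {d : ℕ} (hd : 3 ≤ d) :
    ∃ C : ℝ≥0∞, C ≠ ⊤ ∧ ∀ (W : SRW d) (r ℓ : ℕ) (x : Zd d) (K₁ K₂ : Finset (Zd d)),
      1 ≤ r → 10 * r ≤ supNorm x →
      (∀ u ∈ K₁, supNorm u ≤ 3 * r) → (∀ u ∈ K₂, supNorm (u - x) ≤ 3 * r) →
      16 * r ^ 2 ≤ ℓ →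
      ∑' z : {z : Zd d // 4 * r ≤ supNorm z ∧ 4 * r ≤ supNorm (z - x)},
          W.P z.1 (HitBy (K₁ : Set (Zd d)) ℓ ∩ HitBy (K₂ : Set (Zd d)) ℓ)
        ≤ C * ℓ * cap K₁ * cap K₂ * ((supNorm x : ℝ≥0∞)) ^ ((2 : ℤ) - d) := by
  obtain ⟨C, hC, hbound⟩ := sum_double_hitting_upper_bound_general hd (by norm_num : 3 < 4)
  exact ⟨C, hC, fun W r ℓ x K₁ K₂ hr hx hK₁ hK₂ _ =>
    hbound W r ℓ x K₁ K₂ hr (by omega) hK₁ hK₂⟩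

end
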